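/- Let α > 0 and p, q ≥ 2. There exists a constant C ∈ (0,∞), depending only on α, p, q, such that for every locally Lipschitz g : ℝ³ → ℝ supported in {x ∈ ℝ³ : N(x) ≥ 1} one has ∫ |g|^q N^{p−3} e^{−α N^p} dx ≤ C ∫ (|∇g|^q + |g|^q) e^{−α N^p} dx, where ∇ is the Heisenberg sub-gradient (a U-bound for the Kaplan norm). -/

import Mathlib

open MeasureTheory Filter
open scoped ENNReal

noncomputable section

/-- The underlying space `ℝ³` of the Heisenberg group. -/
abbrev Spin3 : Type := Fin 3 → ℝ

/-- The Heisenberg vector field `X¹ = ∂₁ + 2x₂∂₃` applied to `f` at `x`. -/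
def X1 (f : Spin3 → ℝ) (x : Spin3) : ℝ :=
  fderiv ℝ f x (Pi.single 0 1) + 2 * x 1 * fderiv ℝ f x (Pi.single 2 1)

/-- The Heisenberg vector field `X² = ∂₂ − 2x₁∂₃` applied to `f` at `x`. -/
def X2 (f : Spin3 → ℝ) (x : Spin3) : ℝ :=
  fderiv ℝ f x (Pi.single 1 1) - 2 * x 0 * fderiv ℝ f x (Pi.single 2 1)

/-- The length `|∇f|` of the Heisenberg sub-gradient `∇f = (X¹f, X²f)`. -/
def hGrad (f : Spin3 → ℝ) (x : Spin3) : ℝ := Real.sqrt (X1 f x ^ 2 + X2 f x ^ 2)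

/-- The Kaplan norm `N(x) = ((x₁²+x₂²)² + 16x₃²)^{1/4}` on the Heisenberg group. -/
def kaplan (x : Spin3) : ℝ := ((x 0 ^ 2 + x 1 ^ 2) ^ 2 + 16 * x 2 ^ 2) ^ ((1 : ℝ) / 4)


lemma lip_of_compact {G : Spin3 → ℝ} (hG : LocallyLipschitz G) (hc : HasCompactSupport G) :
    ∃ K, LipschitzWith K G := by
  obtain ⟨R, hR⟩ := hc.isCompact.isBounded.subset_closedBall (0 : Spin3)
  obtain ⟨K, hK⟩ := (hG.locallyLipschitzOn (s := Metric.closedBall (0 : Spin3) (R + 1))).exists_lipschitzOnWith_of_compact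
    (isCompact_closedBall _ _)
  obtain ⟨B, hB⟩ := hc.exists_bound_of_continuous hG.continuous
  have hB0 : 0 ≤ B := (norm_nonneg _).trans (hB 0)
  have hz : ∀ x, x ∉ Metric.closedBall (0 : Spin3) R → G x = 0 := by
    intro x hx
    by_contra h
    exact hx (hR (subset_tsupport _ h))
  have key : ∀ x y, y ∉ Metric.closedBall (0 : Spin3) (R + 1) →
      dist (G x) (G y) ≤ (K + B) * dist x y := by
    intro x y hy
    have hy' : y ∉ Metric.closedBall (0 : Spin3) R := fun h =>
      hy (Metric.closedBall_subset_closedBall (by linarith) h)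
    by_cases hx : x ∈ Metric.closedBall (0 : Spin3) R
    · have h1 : 1 ≤ dist x y := by
        rw [Metric.mem_closedBall] at hx hy
        have := dist_triangle y x 0
        rw [dist_comm y x] at this
        linarith
      rw [hz y hy', Real.dist_eq, sub_zero]
      have := hB x
      rw [Real.norm_eq_abs] at this
      have hK0 : (0 : ℝ) ≤ K := K.2
      nlinarith
    · rw [hz x hx, hz y hy']
      simp only [dist_self]
      positivity
  refine ⟨K + ⟨B, hB0⟩, LipschitzWith.of_dist_le_mul fun x y => ?_⟩
  by_cases hy : y ∈ Metric.closedBall (0 : Spin3) (R + 1)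
  · by_cases hx : x ∈ Metric.closedBall (0 : Spin3) (R + 1)
    · refine (hK.dist_le_mul x hx y hy).trans ?_
      exact mul_le_mul_of_nonneg_right (le_add_of_nonneg_right hB0) dist_nonneg
    · rw [dist_comm, dist_comm x]
      exact key y x hx
  · exact key x y hy

lemma ae_diff {g : Spin3 → ℝ} (hg : LocallyLipschitz g) :
    ∀ᵐ x, DifferentiableAt ℝ g x := by
  have : ∀ n : ℕ, ∀ᵐ x : Spin3, x ∈ Metric.ball (0 : Spin3) n → DifferentiableAt ℝ g x := by
    intro n
    obtain ⟨K, hK⟩ := (hg.locallyLipschitzOn (s := Metric.closedBall (0 : Spin3) n)).exists_lipschitzOnWith_of_compact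
      (isCompact_closedBall _ _)
    filter_upwards [(hK.mono Metric.ball_subset_closedBall).ae_differentiableWithinAt_of_mem (μ := volume)] with x hx hxm
    exact (hx hxm).differentiableAt (Metric.isOpen_ball.mem_nhds hxm)
  rw [← ae_all_iff] at this
  filter_upwards [this] with x hx
  obtain ⟨n, hn⟩ := exists_nat_gt (dist x 0)
  exact hx n hn

lemma fd_int {G : Spin3 → ℝ} {K} (hG : LipschitzWith K G) (hc : HasCompactSupport G)
    (c : Spin3 → ℝ) (hcc : Continuous c) (v : Spin3) :
    Integrable (fun x => c x * fderiv ℝ G x v) := by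
  have hs : Function.support (fun x => c x * fderiv ℝ G x v) ⊆ tsupport G := by
    intro x hx
    apply support_fderiv_subset ℝ
    intro h
    simp [h] at hx
  rw [← integrableOn_iff_integrable_of_support_subset hs]
  refine IntegrableOn.continuousOn_mul hcc.continuousOn ?_ hc.isCompact
  refine Measure.integrableOn_of_bounded (M := K * ‖v‖) hc.isCompact.measure_lt_top.ne
    (measurable_fderiv_apply_const ℝ G v).aestronglyMeasurable ?_
  refine Eventually.of_forall fun x => ?_
  refine ((fderiv ℝ G x).le_opNorm v).trans ?_
  gcongr
  exact norm_fderiv_le_of_lipschitz ℝ hG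

lemma fd_zero {G : Spin3 → ℝ} {K} (hG : LipschitzWith K G) (hc : HasCompactSupport G)
    (c : Spin3 → ℝ) {K'} (hcc : LipschitzWith K' c) (v : Spin3)
    (h0 : ∀ x, lineDeriv ℝ c x v = 0) :
    ∫ x, c x * fderiv ℝ G x v = 0 := by
  have h1 := LipschitzWith.integral_lineDeriv_mul_eq (μ := volume) hcc hG hc v
  simp only [h0, zero_mul, integral_zero] at h1
  have h2 : ∫ x, lineDeriv ℝ G x (-v) * c x = ∫ x, -(c x * fderiv ℝ G x v) := by
    apply integral_congr_ae
    filter_upwards [ae_diff hG.locallyLipschitz] with x hx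
    rw [hx.lineDeriv_eq_fderiv, map_neg]; ring
  rw [h2, integral_neg] at h1
  linarith

lemma lip_coord (a : ℝ) (i : Fin 3) : ∃ K, LipschitzWith K (fun x : Spin3 => a * x i) := by
  refine ⟨‖a • (ContinuousLinearMap.proj (R := ℝ) (φ := fun _ : Fin 3 => ℝ) i)‖₊, ?_⟩
  exact (a • (ContinuousLinearMap.proj (R := ℝ) (φ := fun _ : Fin 3 => ℝ) i)).lipschitz

lemma ld_coord (a : ℝ) (i : Fin 3) (hi : i ≠ 2) (x : Spin3) :
    lineDeriv ℝ (fun x : Spin3 => a * x i) x (Pi.single 2 1) = 0 := by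
  simp [lineDeriv, hi]

lemma ibp_int {G H : Spin3 → ℝ} (hG : LocallyLipschitz G) (hc : HasCompactSupport G)
    (hH : LocallyLipschitz H) (hd : HasCompactSupport H) :
    Integrable (fun x => X1 G x + X2 H x) ∧ ∫ x, (X1 G x + X2 H x) = 0 := by
  obtain ⟨K, hG⟩ := lip_of_compact hG hc
  obtain ⟨L, hH⟩ := lip_of_compact hH hd
  obtain ⟨_, h1⟩ := lip_coord 2 1
  obtain ⟨_, h2⟩ := lip_coord (-2) 0
  have hone : LipschitzWith 0 (fun _ : Spin3 => (1 : ℝ)) := LipschitzWith.const 1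
  have i1 := fd_int hG hc (fun _ => 1) continuous_const (Pi.single 0 1)
  have i2 := fd_int hG hc _ h1.continuous (Pi.single 2 1)
  have i3 := fd_int hH hd (fun _ => 1) continuous_const (Pi.single 1 1)
  have i4 := fd_int hH hd _ h2.continuous (Pi.single 2 1)
  have z1 := fd_zero hG hc (fun _ => 1) hone (Pi.single 0 1) (by simp [lineDeriv])
  have z2 := fd_zero hG hc _ h1 (Pi.single 2 1) (ld_coord _ _ (by decide))
  have z3 := fd_zero hH hd (fun _ => 1) hone (Pi.single 1 1) (by simp [lineDeriv])
  have z4 := fd_zero hH hd _ h2 (Pi.single 2 1) (ld_coord _ _ (by decide))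
  have e : (fun x => X1 G x + X2 H x) = fun x =>
      (1 * fderiv ℝ G x (Pi.single 0 1) + 2 * x 1 * fderiv ℝ G x (Pi.single 2 1)) +
      (1 * fderiv ℝ H x (Pi.single 1 1) + -2 * x 0 * fderiv ℝ H x (Pi.single 2 1)) := by
    funext x; simp only [X1, X2]; ring
  rw [e]
  refine ⟨(i1.add i2).add (i3.add i4), ?_⟩
  refine (integral_add (i1.add i2) (i3.add i4)).trans ?_
  simp only [Pi.add_apply]
  rw [integral_add i1 i2, integral_add i3 i4, z1, z2, z3, z4]
  simp

lemma kaplan_nonneg (x : Spin3) : 0 ≤ kaplan x := by unfold kaplan; positivity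

lemma kaplan_pow (x : Spin3) : kaplan x ^ 4 = (x 0 ^ 2 + x 1 ^ 2) ^ 2 + 16 * x 2 ^ 2 := by
  unfold kaplan
  rw [← Real.rpow_natCast, ← Real.rpow_mul (by positivity)]
  norm_num

lemma kaplan_cont : Continuous kaplan := by
  unfold kaplan
  apply Continuous.rpow_const (by fun_prop)
  intro x; right; norm_num

lemma hasDeriv_possq (u : ℝ) : HasDerivAt (fun u : ℝ => max 0 u ^ 2) (2 * max 0 u) u := by
  rcases lt_trichotomy u 0 with h | h | h
  · have : (fun u : ℝ => max 0 u ^ 2) =ᶠ[nhds u] fun _ => 0 := by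
      filter_upwards [gt_mem_nhds h] with v hv
      rw [max_eq_left hv.le]; simp
    rw [max_eq_left h.le, mul_zero]
    exact (hasDerivAt_const u (0:ℝ)).congr_of_eventuallyEq this
  · subst h
    have h2 := (hasDerivAt_pow 2 (0:ℝ))
    simp only [max_self, mul_zero]
    rw [hasDerivAt_iff_isLittleO] at h2 ⊢
    simp only [max_self, ne_eq, OfNat.ofNat_ne_zero, not_false_eq_true, zero_pow, sub_zero, smul_zero] at h2 ⊢
    norm_num at h2
    refine Asymptotics.IsBigO.trans_isLittleO (Asymptotics.IsBigO.of_bound 1 ?_) h2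
    refine Eventually.of_forall fun v => ?_
    rw [one_mul, Real.norm_of_nonneg (by positivity), Real.norm_of_nonneg (by positivity)]
    rcases max_cases 0 v with ⟨h, _⟩ | ⟨h, _⟩ <;> rw [h]
    nlinarith [sq_nonneg v]
  · have : (fun u : ℝ => max 0 u ^ 2) =ᶠ[nhds u] fun v => v ^ 2 := by
      filter_upwards [lt_mem_nhds h] with v hv
      rw [max_eq_right hv.le]
    rw [max_eq_right h.le]
    have h2 := (hasDerivAt_pow 2 u)
    norm_num at h2
    exact h2.congr_of_eventuallyEq this

lemma contDiff_possq : ContDiff ℝ 1 (fun u : ℝ => max 0 u ^ 2) := by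
  rw [contDiff_one_iff_deriv]
  refine ⟨fun u => (hasDeriv_possq u).differentiableAt, ?_⟩
  have : deriv (fun u : ℝ => max 0 u ^ 2) = fun u => 2 * max 0 u :=
    funext fun u => (hasDeriv_possq u).deriv
  rw [this]; fun_prop

def phi (α p n ν : ℝ) : ℝ :=
  ν ^ (p - 4) * max 0 (1 - ν / n) ^ 2 * Real.exp (-(α * ν ^ p))

def dphi (α p n ν : ℝ) : ℝ :=
  ν ^ (p - 4) * Real.exp (-(α * ν ^ p)) *
    (((p - 4) / ν - α * p * ν ^ (p - 1)) * max 0 (1 - ν / n) ^ 2 - 2 / n * max 0 (1 - ν / n))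

lemma phi_deriv (α p n ν : ℝ) (hν : 0 < ν) : HasDerivAt (phi α p n) (dphi α p n ν) ν := by
  have h1 : HasDerivAt (fun ν : ℝ => ν ^ (p - 4)) _ ν := Real.hasDerivAt_rpow_const (Or.inl hν.ne')
  have h2 : HasDerivAt (fun ν : ℝ => max 0 (1 - ν / n) ^ 2)
      (2 * max 0 (1 - ν / n) * -(1 / n)) ν :=
    HasDerivAt.comp (h₂ := fun u : ℝ => max 0 u ^ 2) ν (hasDeriv_possq (1 - ν / n))
      (((hasDerivAt_id ν).div_const n).const_sub 1)
  have h3 : HasDerivAt (fun ν : ℝ => ν ^ p) _ ν := Real.hasDerivAt_rpow_const (Or.inl hν.ne')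
  have h4 := ((h3.const_mul α).neg).exp
  have h5 := (h1.mul h2).mul h4
  refine h5.congr_deriv ?_
  unfold dphi
  rw [Real.rpow_sub_one hν.ne' (p - 4)]
  simp only [Pi.mul_apply, Pi.neg_apply]
  field_simp
  ring

lemma phi_contDiff (α p n ν : ℝ) (hν : 0 < ν) : ContDiffAt ℝ 1 (phi α p n) ν := by
  have h1 : ContDiffAt ℝ 1 (fun ν : ℝ => ν ^ (p - 4)) ν := Real.contDiffAt_rpow_const_of_ne hν.ne'
  have h3 : ContDiffAt ℝ 1 (fun ν : ℝ => ν ^ p) ν := Real.contDiffAt_rpow_const_of_ne hν.ne'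
  have h2 : ContDiffAt ℝ 1 (fun ν : ℝ => max 0 (1 - ν / n) ^ 2) ν :=
    ContDiffAt.comp (g := fun u : ℝ => max 0 u ^ 2) ν contDiff_possq.contDiffAt (by fun_prop)
  unfold phi
  fun_prop

lemma kaplan_contDiff (x : Spin3) (hx : 0 < kaplan x) : ContDiffAt ℝ 1 kaplan x := by
  have h : (x 0 ^ 2 + x 1 ^ 2) ^ 2 + 16 * x 2 ^ 2 ≠ 0 := by
    rw [← kaplan_pow]; positivity
  unfold kaplan
  exact ContDiffAt.rpow_const_of_ne (f := fun x : Spin3 => (x 0 ^ 2 + x 1 ^ 2) ^ 2 + 16 * x 2 ^ 2)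
    (by fun_prop) h

lemma kaplan_line (x : Spin3) (hx : 0 < kaplan x) (a b c : ℝ) :
    HasDerivAt (fun s : ℝ => kaplan (x + s • ![a, b, c]))
      (((x 0 ^ 2 + x 1 ^ 2) * (x 0 * a + x 1 * b) + 8 * x 2 * c) / kaplan x ^ 3) 0 := by
  have h0 : (x 0 ^ 2 + x 1 ^ 2) ^ 2 + 16 * x 2 ^ 2 > 0 := by
    rw [← kaplan_pow]; positivity
  have l : ∀ y d : ℝ, HasDerivAt (fun s : ℝ => y + s * d) d 0 := fun y d => by
    simpa using ((hasDerivAt_id (0:ℝ)).mul_const d).const_add y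
  have hM := (((((l (x 0) a).pow 2).add ((l (x 1) b).pow 2)).pow 2).add
    (((l (x 2) c).pow 2).const_mul 16)).rpow_const (p := 1 / 4) (Or.inl (by simpa using h0.ne'))
  have e : (fun s : ℝ => kaplan (x + s • ![a, b, c])) = fun s : ℝ =>
    (((x 0 + s * a) ^ 2 + (x 1 + s * b) ^ 2) ^ 2 + 16 * (x 2 + s * c) ^ 2) ^ ((1 : ℝ) / 4) := by
    funext s; simp [kaplan]
  rw [e]
  refine hM.congr_deriv ?_
  have h3 : kaplan x ^ 3 ≠ 0 := by positivity
  have h4 : ((x 0 ^ 2 + x 1 ^ 2) ^ 2 + 16 * x 2 ^ 2) ^ ((1 : ℝ) / 4 - 1) = (kaplan x ^ 3)⁻¹ := by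
    unfold kaplan
    rw [← Real.rpow_natCast (_ ^ ((1 : ℝ) / 4)) 3, ← Real.rpow_mul h0.le, ← Real.rpow_neg h0.le]
    norm_num
  simp
  norm_num at h4 ⊢
  rw [h4]
  field_simp
  ring

lemma X1_eq {f : Spin3 → ℝ} {x : Spin3} (hf : DifferentiableAt ℝ f x) {D : ℝ}
    (h : HasDerivAt (fun s : ℝ => f (x + s • ![1, 0, 2 * x 1])) D 0) : X1 f x = D := by
  have h1 := HasDerivAt.unique (hf.hasFDerivAt.hasLineDerivAt ![1, 0, 2 * x 1]) h
  rw [← h1]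
  have : (![1, 0, 2 * x 1] : Spin3) = Pi.single 0 1 + (2 * x 1) • Pi.single 2 1 := by
    ext i; fin_cases i <;> simp
  rw [this, map_add, map_smul]; rfl

lemma X2_eq {f : Spin3 → ℝ} {x : Spin3} (hf : DifferentiableAt ℝ f x) {D : ℝ}
    (h : HasDerivAt (fun s : ℝ => f (x + s • ![0, 1, -(2 * x 0)])) D 0) : X2 f x = D := by
  have h1 := HasDerivAt.unique (hf.hasFDerivAt.hasLineDerivAt ![0, 1, -(2 * x 0)]) h
  rw [← h1]
  have : (![0, 1, -(2 * x 0)] : Spin3) = Pi.single 1 1 - (2 * x 0) • Pi.single 2 1 := by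
    ext i; fin_cases i <;> simp
  rw [this, map_sub, map_smul]; rfl

def w1 (α p n : ℝ) (x : Spin3) : ℝ :=
  phi α p n (kaplan x) * (2 * ((x 0 ^ 2 + x 1 ^ 2) * x 0 + 4 * x 2 * x 1) - kaplan x ^ 2 * x 0)

def w2 (α p n : ℝ) (x : Spin3) : ℝ :=
  phi α p n (kaplan x) * (2 * ((x 0 ^ 2 + x 1 ^ 2) * x 1 - 4 * x 2 * x 0) - kaplan x ^ 2 * x 1)

lemma phi_kap_contDiff (α p n : ℝ) (x : Spin3) (hx : 0 < kaplan x) :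
    ContDiffAt ℝ 1 (fun x => phi α p n (kaplan x)) x :=
  ContDiffAt.comp x (phi_contDiff α p n _ hx) (kaplan_contDiff x hx)

lemma w1_contDiff (α p n : ℝ) (x : Spin3) (hx : 0 < kaplan x) :
    ContDiffAt ℝ 1 (w1 α p n) x := by
  have h1 := phi_kap_contDiff α p n x hx
  have h2 := kaplan_contDiff x hx
  unfold w1
  fun_prop

lemma w2_contDiff (α p n : ℝ) (x : Spin3) (hx : 0 < kaplan x) :
    ContDiffAt ℝ 1 (w2 α p n) x := by
  have h1 := phi_kap_contDiff α p n x hx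
  have h2 := kaplan_contDiff x hx
  unfold w2
  fun_prop

lemma G_lip (q : ℝ) (hq : 2 ≤ q) (g : Spin3 → ℝ) (hg : LocallyLipschitz g)
    (h0 : ∀ x, kaplan x < 1 → g x = 0) (w : Spin3 → ℝ)
    (hw : ∀ x, 0 < kaplan x → ContDiffAt ℝ 1 w x) :
    LocallyLipschitz (fun x => |g x| ^ q * w x) := by
  intro x
  by_cases hx : kaplan x < 1
  · refine ⟨0, {y | kaplan y < 1}, (isOpen_lt kaplan_cont continuous_const).mem_nhds hx, ?_⟩
    intro y hy z hz
    simp only [h0 y hy, h0 z hz, abs_zero, Real.zero_rpow (by linarith : q ≠ 0), zero_mul, edist_self]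
    exact zero_le
  · have hx' : 0 < kaplan x := by linarith
    have habs : ContDiff ℝ 1 (fun y : ℝ => |y| ^ q) := contDiff_norm_rpow (E := ℝ) (by linarith)
    have hΦ : ContDiffAt ℝ 1 (fun z : ℝ × Spin3 => |z.1| ^ q * w z.2) (g x, x) := by
      apply ContDiffAt.mul
      · exact ContDiffAt.comp (g := fun y : ℝ => |y| ^ q) _ habs.contDiffAt contDiffAt_fst
      · exact ContDiffAt.comp (g := w) (g x, x) (hw x hx') contDiffAt_snd
    obtain ⟨K, t, ht, hK⟩ := hΦ.exists_lipschitzOnWith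
    obtain ⟨L, s, hs, hL⟩ := (hg.prodMk LocallyLipschitz.id) x
    have hc : ContinuousAt (fun y => (g y, id y)) x := (hg.continuous.prodMk continuous_id).continuousAt
    refine ⟨K * L, s ∩ (fun y => (g y, id y)) ⁻¹' t, inter_mem hs (hc ht), ?_⟩
    exact hK.comp (hL.mono Set.inter_subset_left) (fun y hy => hy.2)

lemma phi_zero (α p n ν : ℝ) (hn : 0 < n) (h : n ≤ ν) : phi α p n ν = 0 := by
  have : 1 - ν / n ≤ 0 := by
    rw [sub_nonpos, le_div_iff₀ hn]; linarith
  unfold phi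
  rw [max_eq_left this]; simp

lemma G_supp (α p n : ℝ) (hn : 1 ≤ n) (u v : Spin3 → ℝ) :
    HasCompactSupport (fun x => u x * (phi α p n (kaplan x) * v x)) := by
  refine HasCompactSupport.intro (isCompact_closedBall (0 : Spin3) (n ^ 2)) ?_
  intro x hx
  rw [phi_zero α p n (kaplan x) (by linarith)]
  · simp
  by_contra! h
  apply hx
  rw [mem_closedBall_zero_iff, pi_norm_le_iff_of_nonneg (by positivity)]
  have h4 : kaplan x ^ 4 ≤ n ^ 4 := by
    have := kaplan_nonneg x
    gcongr
  rw [kaplan_pow] at h4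
  have e4 : n ^ 4 = (n ^ 2) ^ 2 := by ring
  have hr : x 0 ^ 2 + x 1 ^ 2 ≤ n ^ 2 := by
    apply le_of_sq_le_sq _ (by positivity)
    nlinarith [sq_nonneg (x 2)]
  have hnn : n ^ 2 ≤ (n ^ 2) ^ 2 := by nlinarith [sq_nonneg n, show 1 ≤ n ^ 2 by nlinarith]
  intro i
  rw [Real.norm_eq_abs]
  apply abs_le_of_sq_le_sq _ (by positivity)
  fin_cases i <;> simp <;> nlinarith [sq_nonneg (x 0), sq_nonneg (x 1), sq_nonneg (x 2), sq_nonneg (x 0 ^ 2 + x 1 ^ 2)]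

lemma div_formula (α p n q : ℝ) (hq : 2 ≤ q) (g : Spin3 → ℝ) (x : Spin3)
    (hx : 0 < kaplan x) (hd : DifferentiableAt ℝ g x) :
    X1 (fun x => |g x| ^ q * w1 α p n x) x + X2 (fun x => |g x| ^ q * w2 α p n x) x =
      q * |g x| ^ (q - 2) * g x * (X1 g x * w1 α p n x + X2 g x * w2 α p n x) +
      |g x| ^ q * (dphi α p n (kaplan x) *
        (2 * (x 0 ^ 2 + x 1 ^ 2) * ((x 0 ^ 2 + x 1 ^ 2) ^ 2 + 64 * x 2 ^ 2)
          - kaplan x ^ 2 * (x 0 ^ 2 + x 1 ^ 2) ^ 2) / kaplan x ^ 3 +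
        phi α p n (kaplan x) * (-(2 * (x 0 ^ 2 + x 1 ^ 2) ^ 2 / kaplan x ^ 2)
          + 24 * (x 0 ^ 2 + x 1 ^ 2) - 2 * kaplan x ^ 2)) := by
  have hh : DifferentiableAt ℝ (fun x => |g x| ^ q) x :=
    DifferentiableAt.comp (g := fun y : ℝ => |y| ^ q) x
      (hasDerivAt_abs_rpow (g x) (by linarith)).differentiableAt hd
  have d1 := hh.mul ((w1_contDiff α p n x hx).differentiableAt one_ne_zero)
  have d2 := hh.mul ((w2_contDiff α p n x hx).differentiableAt one_ne_zero)
  have l : ∀ y d : ℝ, HasDerivAt (fun s : ℝ => y + s * d) d 0 := fun y d => by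
    simpa using ((hasDerivAt_id (0:ℝ)).mul_const d).const_add y
  have lg : ∀ v : Spin3, HasDerivAt (fun s : ℝ => |g (x + s • v)| ^ q)
      (q * |g x| ^ (q - 2) * g x * fderiv ℝ g x v) 0 := by
    intro v
    have a := hasDerivAt_abs_rpow (g x) (show 1 < q by linarith)
    have b : HasDerivAt (fun s : ℝ => g (x + s • v)) (fderiv ℝ g x v) 0 :=
      hd.hasFDerivAt.hasLineDerivAt v
    have a' : HasDerivAt (fun y : ℝ => |y| ^ q) (q * |g x| ^ (q - 2) * g x) (g (x + (0:ℝ) • v)) := by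
      simpa using a
    exact HasDerivAt.comp (h₂ := fun y : ℝ => |y| ^ q) 0 a' b
  have lphi : ∀ a b c : ℝ, HasDerivAt (fun s : ℝ => phi α p n (kaplan (x + s • ![a, b, c])))
      (dphi α p n (kaplan x) *
        (((x 0 ^ 2 + x 1 ^ 2) * (x 0 * a + x 1 * b) + 8 * x 2 * c) / kaplan x ^ 3)) 0 := by
    intro a b c
    have a' : HasDerivAt (phi α p n) (dphi α p n (kaplan x)) (kaplan (x + (0:ℝ) • ![a, b, c])) := by
      simpa using phi_deriv α p n (kaplan x) hx
    exact HasDerivAt.comp (h₂ := phi α p n) 0 a' (kaplan_line x hx a b c)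
  have lc : ∀ a b c : ℝ, ∀ i : Fin 3, HasDerivAt (fun s : ℝ => (x + s • ![a, b, c]) i)
      (![a, b, c] i) 0 := by
    intro a b c i
    exact l (x i) (![a, b, c] i)
  have k1 : X1 g x = fderiv ℝ g x ![1, 0, 2 * x 1] :=
    X1_eq hd (hd.hasFDerivAt.hasLineDerivAt _)
  have k2 : X2 g x = fderiv ℝ g x ![0, 1, -(2 * x 0)] :=
    X2_eq hd (hd.hasFDerivAt.hasLineDerivAt _)
  have m1 : HasDerivAt (fun s : ℝ => w1 α p n (x + s • ![1, 0, 2 * x 1])) _ 0 :=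
    (lphi 1 0 (2 * x 1)).mul
      ((((((((lc 1 0 (2 * x 1) 0).pow 2).add ((lc 1 0 (2 * x 1) 1).pow 2)).mul (lc 1 0 (2 * x 1) 0)).add
        (((lc 1 0 (2 * x 1) 2).const_mul 4).mul (lc 1 0 (2 * x 1) 1))).const_mul 2)).sub
        (((kaplan_line x hx 1 0 (2 * x 1)).pow 2).mul (lc 1 0 (2 * x 1) 0)))
  have m2 : HasDerivAt (fun s : ℝ => w2 α p n (x + s • ![0, 1, -(2 * x 0)])) _ 0 :=
    (lphi 0 1 (-(2 * x 0))).mul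
      ((((((((lc 0 1 (-(2 * x 0)) 0).pow 2).add ((lc 0 1 (-(2 * x 0)) 1).pow 2)).mul (lc 0 1 (-(2 * x 0)) 1)).sub
        (((lc 0 1 (-(2 * x 0)) 2).const_mul 4).mul (lc 0 1 (-(2 * x 0)) 0))).const_mul 2)).sub
        (((kaplan_line x hx 0 1 (-(2 * x 0))).pow 2).mul (lc 0 1 (-(2 * x 0)) 1)))
  rw [X1_eq (f := fun x => |g x| ^ q * w1 α p n x) d1 ((lg _).mul m1),
    X2_eq (f := fun x => |g x| ^ q * w2 α p n x) d2 ((lg _).mul m2), ← k1, ← k2]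
  simp only [zero_smul, add_zero, Pi.pow_apply, Pi.add_apply]
  simp [w1, w2]
  field_simp
  ring

lemma rpow_split (a q : ℝ) (ha : 0 ≤ a) (hq : 2 ≤ q) : a ^ q = a ^ (q - 2) * a ^ 2 := by
  rcases ha.eq_or_lt with h | h
  · rw [← h, Real.zero_rpow (by linarith)]; simp
  · rw [← Real.rpow_natCast, ← Real.rpow_add h]; norm_num

lemma young_q (a b q : ℝ) (ha : 0 ≤ a) (hb : 0 ≤ b) (hq : 2 ≤ q) :
    a ^ (q - 2) * b ^ 2 ≤ a ^ q + b ^ q := by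
  rcases le_total a b with h | h
  · have : a ^ (q - 2) ≤ b ^ (q - 2) := Real.rpow_le_rpow ha h (by linarith)
    have := mul_le_mul_of_nonneg_right this (sq_nonneg b)
    rw [← rpow_split b q hb hq] at this
    have := Real.rpow_nonneg ha q
    linarith
  · have : b ^ 2 ≤ a ^ 2 := by gcongr
    have := mul_le_mul_of_nonneg_left this (Real.rpow_nonneg ha (q - 2))
    rw [← rpow_split a q ha hq] at this
    have := Real.rpow_nonneg hb q
    linarith

/-- Pure real inequality for the divergence term. -/
lemma S_bound (κ m n ρ r t ν P χ : ℝ) (hκ : 0 < κ) (hn : 1 ≤ n) (hr : 0 ≤ r) (hρ : ρ = r ^ 2)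
    (hν : 1 ≤ ν) (h4 : ν ^ 4 = ρ ^ 2 + 16 * t ^ 2) (hP : 0 < P) (h0 : 0 ≤ χ) (h1 : χ ≤ 1) :
    (P / ν ^ 2) * ((m / ν - κ * (P * ν)) * χ ^ 2 - 2 / n * χ) *
      (2 * ρ * (ρ ^ 2 + 64 * t ^ 2) - ν ^ 2 * ρ ^ 2) / ν ^ 3 +
      (P / ν ^ 2 * χ ^ 2) * (-(2 * ρ ^ 2 / ν ^ 2) + 24 * ρ - 2 * ν ^ 2) ≤
    -κ * (r * P * χ) ^ 2 + (8 * |m| + 24) * (r * P * χ) - 2 * P * χ ^ 2 := by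
  have hν0 : 0 < ν := by linarith
  have hρ0 : 0 ≤ ρ := by rw [hρ]; positivity
  have hρν : ρ ≤ ν ^ 2 := by
    apply le_of_sq_le_sq _ (by positivity)
    nlinarith [sq_nonneg t]
  have hrν : r ≤ ν := by
    apply le_of_sq_le_sq _ hν0.le
    linarith
  set T := 2 * ρ * (ρ ^ 2 + 64 * t ^ 2) - ν ^ 2 * ρ ^ 2 with hT
  have hT1 : ρ * ν ^ 4 ≤ T := by
    have : ν ^ 2 * ρ ^ 2 ≤ ρ * ν ^ 4 := by
      have := mul_le_mul_of_nonneg_left hρν (by positivity : 0 ≤ ρ * ν ^ 2)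
      nlinarith
    have h2 : ρ * ν ^ 4 ≤ ρ * (ρ ^ 2 + 64 * t ^ 2) := by
      apply mul_le_mul_of_nonneg_left _ hρ0
      nlinarith [sq_nonneg t]
    rw [hT]; linarith
  have hT2 : T ≤ 8 * (ρ * ν ^ 4) := by
    have h2 : ρ * (ρ ^ 2 + 64 * t ^ 2) ≤ ρ * (4 * ν ^ 4) := by
      apply mul_le_mul_of_nonneg_left _ hρ0
      nlinarith [sq_nonneg ρ]
    have : 0 ≤ ν ^ 2 * ρ ^ 2 := by positivity
    rw [hT]; linarith
  have hT0 : 0 ≤ T := le_trans (by positivity) hT1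
  -- normalized
  set τ := T / ν ^ 4 with hτ
  have t1 : ρ ≤ τ := by rw [hτ, le_div_iff₀ (by positivity)]; exact hT1
  have t2 : τ ≤ 8 * ρ := by rw [hτ, div_le_iff₀ (by positivity)]; linarith
  have t0 : 0 ≤ τ := by positivity
  have e : (P / ν ^ 2) * ((m / ν - κ * (P * ν)) * χ ^ 2 - 2 / n * χ) * T / ν ^ 3 +
      (P / ν ^ 2 * χ ^ 2) * (-(2 * ρ ^ 2 / ν ^ 2) + 24 * ρ - 2 * ν ^ 2) =
      m * (P * χ ^ 2 * τ / ν ^ 2) - κ * P ^ 2 * χ ^ 2 * τ - 2 / n * χ * P * τ / ν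
       - 2 * P * χ ^ 2 * ρ ^ 2 / ν ^ 4 + 24 * (P * χ ^ 2 * ρ / ν ^ 2) - 2 * P * χ ^ 2 := by
    rw [hτ]
    field_simp
    ring
  rw [e]
  have b0 : χ ^ 2 * ρ / ν ^ 2 ≤ r * χ := by
    rw [div_le_iff₀ (by positivity), hρ]
    have c1 : r * χ ≤ ν ^ 2 := by nlinarith
    have := mul_le_mul_of_nonneg_left c1 (by positivity : 0 ≤ r * χ)
    nlinarith
  have b1 : P * χ ^ 2 * ρ / ν ^ 2 ≤ r * P * χ := by
    have := mul_le_mul_of_nonneg_left b0 hP.le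
    calc _ = P * (χ ^ 2 * ρ / ν ^ 2) := by ring
      _ ≤ _ := this
      _ = _ := by ring
  have b2 : P * χ ^ 2 * τ / ν ^ 2 ≤ 8 * (r * P * χ) := by
    calc _ ≤ P * χ ^ 2 * (8 * ρ) / ν ^ 2 := by gcongr
      _ = 8 * (P * χ ^ 2 * ρ / ν ^ 2) := by ring
      _ ≤ _ := by linarith
  have b3 : m * (P * χ ^ 2 * τ / ν ^ 2) ≤ |m| * (8 * (r * P * χ)) := by
    calc _ ≤ |m| * (P * χ ^ 2 * τ / ν ^ 2) := by
          apply mul_le_mul_of_nonneg_right (le_abs_self m) (by positivity)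
      _ ≤ _ := by gcongr
  have b4 : κ * (r * P * χ) ^ 2 ≤ κ * P ^ 2 * χ ^ 2 * τ := by
    have := mul_le_mul_of_nonneg_left t1 (by positivity : 0 ≤ κ * P ^ 2 * χ ^ 2)
    rw [hρ] at this
    calc _ = κ * P ^ 2 * χ ^ 2 * r ^ 2 := by ring
      _ ≤ _ := this
  have b5 : 0 ≤ 2 / n * χ * P * τ / ν := by positivity
  have b6 : 0 ≤ 2 * P * χ ^ 2 * ρ ^ 2 / ν ^ 4 := by positivity
  linarith

lemma cs_bound (Y1 Y2 a b B : ℝ) (hB : 0 ≤ B) (h : a ^ 2 + b ^ 2 ≤ B ^ 2) :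
    |Y1 * a + Y2 * b| ≤ Real.sqrt (Y1 ^ 2 + Y2 ^ 2) * B := by
  apply abs_le_of_sq_le_sq _ (by positivity)
  rw [mul_pow, Real.sq_sqrt (by positivity)]
  have := mul_le_mul_of_nonneg_left h (by positivity : 0 ≤ Y1 ^ 2 + Y2 ^ 2)
  nlinarith [sq_nonneg (Y1 * b - Y2 * a)]

lemma young_fin (κ q c k a Γ z : ℝ) (hκ : 0 < κ) (hk : 0 ≤ k) :
    q * k * a * (Γ * (3 * z)) + k * a ^ 2 * (-κ * z ^ 2 + c * z) ≤
      9 * q ^ 2 / (2 * κ) * (k * Γ ^ 2) + c ^ 2 / (2 * κ) * (k * a ^ 2) := by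
  have : 9 * q ^ 2 / (2 * κ) * (k * Γ ^ 2) + c ^ 2 / (2 * κ) * (k * a ^ 2) -
    (q * k * a * (Γ * (3 * z)) + k * a ^ 2 * (-κ * z ^ 2 + c * z)) =
    k * ((3 * q * Γ - κ * a * z) ^ 2 + (c * a - κ * a * z) ^ 2) / (2 * κ) := by
    field_simp
    ring
  have h2 : 0 ≤ k * ((3 * q * Γ - κ * a * z) ^ 2 + (c * a - κ * a * z) ^ 2) / (2 * κ) := by
    positivity
  linarith

def CC (α p q : ℝ) : ℝ := (9 * q ^ 2 + (8 * |p - 4| + 24) ^ 2) / (2 * (α * p))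

set_option maxHeartbeats 1000000 in
lemma main_pt (α p n q : ℝ) (hα : 0 < α) (hp : 2 ≤ p) (hq : 2 ≤ q) (hn : 1 ≤ n)
    (g : Spin3 → ℝ) (x : Spin3) (hx : 1 ≤ kaplan x) (hd : DifferentiableAt ℝ g x) :
    X1 (fun x => |g x| ^ q * w1 α p n x) x + X2 (fun x => |g x| ^ q * w2 α p n x) x ≤
      CC α p q * ((hGrad g x ^ q + |g x| ^ q) * Real.exp (-(α * kaplan x ^ p))) -
      2 * (|g x| ^ q * kaplan x ^ (p - 2) * max 0 (1 - kaplan x / n) ^ 2 *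
        Real.exp (-(α * kaplan x ^ p))) := by
  have hν0 : 0 < kaplan x := by linarith
  rw [div_formula α p n q hq g x hν0 hd]
  have h4 := kaplan_pow x
  set ν := kaplan x with hν
  set E := Real.exp (-(α * ν ^ p)) with hE
  have hE0 : 0 < E := Real.exp_pos _
  set χ := max 0 (1 - ν / n) with hχ
  have h0 : 0 ≤ χ := le_max_left _ _
  have h1 : χ ≤ 1 := by
    apply max_le zero_le_one
    have : 0 ≤ ν / n := by positivity
    linarith
  set P := ν ^ (p - 2) with hP
  have hP0 : 0 < P := by positivity
  have e4 : ν ^ (p - 4) = P / ν ^ 2 := by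
    rw [hP, ← Real.rpow_natCast, ← Real.rpow_sub hν0]; congr 1; push_cast; ring
  have e1 : ν ^ (p - 1) = P * ν := by
    rw [hP, ← Real.rpow_add_one hν0.ne']; congr 1; ring
  set ρ := x 0 ^ 2 + x 1 ^ 2 with hρ
  have hρ0 : 0 ≤ ρ := by positivity
  set r := Real.sqrt ρ with hr
  have hr0 : 0 ≤ r := Real.sqrt_nonneg _
  have hρr : ρ = r ^ 2 := (Real.sq_sqrt hρ0).symm
  have hκ : 0 < α * p := by positivity
  have hphi : phi α p n ν = E * (P / ν ^ 2 * χ ^ 2) := by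
    unfold phi; rw [e4]; ring
  have hdphi : dphi α p n ν = E * ((P / ν ^ 2) * (((p - 4) / ν - α * p * (P * ν)) * χ ^ 2 - 2 / n * χ)) := by
    unfold dphi; rw [e4, e1]; ring
  have hS := S_bound (α * p) (p - 4) n ρ r (x 2) ν P χ hκ hn hr0 hρr hx h4 hP0 h0 h1
  set z := r * P * χ with hz
  have hz0 : 0 ≤ z := by positivity
  have hρν : ρ ≤ ν ^ 2 := by
    apply le_of_sq_le_sq _ (by positivity)
    nlinarith [sq_nonneg (x 2)]
  have hw : w1 α p n x ^ 2 + w2 α p n x ^ 2 ≤ (3 * z * E) ^ 2 := by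
    have ew : w1 α p n x ^ 2 + w2 α p n x ^ 2 = phi α p n ν ^ 2 *
        (ρ * ((2 * ρ - ν ^ 2) ^ 2 + 64 * x 2 ^ 2)) := by
      unfold w1 w2
      rw [← hν, ← hρ]
      rw [hρ]; ring
    rw [ew, hphi]
    have i1 : (2 * ρ - ν ^ 2) ^ 2 + 64 * x 2 ^ 2 ≤ 9 * ν ^ 4 := by
      have j := mul_nonneg hρ0 (sub_nonneg.2 hρν)
      have j2 : 0 ≤ ν ^ 4 := by positivity
      linarith [sq_nonneg ρ, show (2 * ρ - ν ^ 2) ^ 2 = ν ^ 4 - 4 * (ρ * (ν ^ 2 - ρ)) by ring]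
    have i2 : χ ^ 4 ≤ χ ^ 2 := pow_le_pow_of_le_one h0 h1 (by norm_num)
    calc (E * (P / ν ^ 2 * χ ^ 2)) ^ 2 * (ρ * ((2 * ρ - ν ^ 2) ^ 2 + 64 * x 2 ^ 2))
        ≤ (E * (P / ν ^ 2 * χ ^ 2)) ^ 2 * (ρ * (9 * ν ^ 4)) := by gcongr
      _ = 9 * E ^ 2 * P ^ 2 * ρ * χ ^ 4 := by field_simp
      _ ≤ 9 * E ^ 2 * P ^ 2 * ρ * χ ^ 2 := by gcongr
      _ = (3 * z * E) ^ 2 := by rw [hz, hρr]; ring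
  have hcs := cs_bound (X1 g x) (X2 g x) _ _ (3 * z * E) (by positivity) hw
  have hΓ : Real.sqrt (X1 g x ^ 2 + X2 g x ^ 2) = hGrad g x := rfl
  rw [hΓ] at hcs
  set Γ := hGrad g x
  have hΓ0 : 0 ≤ Γ := Real.sqrt_nonneg _
  set a := |g x| with ha
  have ha0 : 0 ≤ a := abs_nonneg _
  set k := a ^ (q - 2) with hk
  have hk0 : 0 ≤ k := by positivity
  have hsp : a ^ q = k * a ^ 2 := rpow_split a q ha0 hq
  have A1 : q * k * g x * (X1 g x * w1 α p n x + X2 g x * w2 α p n x) ≤ E * (q * k * a * (Γ * (3 * z))) := by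
    refine (le_abs_self _).trans ?_
    rw [abs_mul, abs_mul, abs_of_nonneg (by positivity : 0 ≤ q * k), ← ha]
    calc _ ≤ q * k * a * (Γ * (3 * z * E)) := by gcongr
      _ = _ := by ring
  have A2 : a ^ q * (dphi α p n ν * (2 * ρ * (ρ ^ 2 + 64 * x 2 ^ 2) - ν ^ 2 * ρ ^ 2) / ν ^ 3 +
      phi α p n ν * (-(2 * ρ ^ 2 / ν ^ 2) + 24 * ρ - 2 * ν ^ 2)) ≤
      E * (k * a ^ 2 * (-(α * p) * z ^ 2 + (8 * |p - 4| + 24) * z) - a ^ q * (2 * P * χ ^ 2)) := by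
    rw [hphi, hdphi]
    have := mul_le_mul_of_nonneg_left hS (by positivity : 0 ≤ E * a ^ q)
    rw [← hsp]
    refine le_trans (le_of_eq ?_) (this.trans (le_of_eq ?_)) <;> ring
  have A3 := young_fin (α * p) q (8 * |p - 4| + 24) k a Γ z hκ hk0
  have A4 : k * Γ ^ 2 ≤ Γ ^ q + a ^ q := by
    have := young_q a Γ q ha0 hΓ0 hq
    linarith
  have A5 : k * a ^ 2 ≤ Γ ^ q + a ^ q := by
    rw [← hsp]
    have : 0 ≤ Γ ^ q := by positivity
    linarith
  have A6 : 9 * q ^ 2 / (2 * (α * p)) * (k * Γ ^ 2) + (8 * |p - 4| + 24) ^ 2 / (2 * (α * p)) * (k * a ^ 2)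
      ≤ CC α p q * (Γ ^ q + a ^ q) := by
    calc _ ≤ 9 * q ^ 2 / (2 * (α * p)) * (Γ ^ q + a ^ q) + (8 * |p - 4| + 24) ^ 2 / (2 * (α * p)) * (Γ ^ q + a ^ q) := by gcongr
      _ = _ := by unfold CC; ring
  have A7 := mul_le_mul_of_nonneg_left (A3.trans A6) hE0.le
  have A8 := add_le_add A1 A2
  refine A8.trans ?_
  rw [mul_sub, ← add_sub_assoc, ← mul_add]
  have A9 : E * (a ^ q * (2 * P * χ ^ 2)) = 2 * (a ^ q * P * χ ^ 2 * E) := by ring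
  have A10 : CC α p q * ((Γ ^ q + a ^ q) * E) = E * (CC α p q * (Γ ^ q + a ^ q)) := by ring
  rw [A9, A10]
  exact sub_le_sub_right A7 _

lemma CC_pos (α p q : ℝ) (hα : 0 < α) (hp : 2 ≤ p) : 0 < CC α p q := by
  unfold CC; positivity

lemma hGrad_meas (g : Spin3 → ℝ) : Measurable (hGrad g) := by
  have h0 := measurable_fderiv_apply_const ℝ g (Pi.single 0 1)
  have h1 := measurable_fderiv_apply_const ℝ g (Pi.single 1 1)
  have h2 := measurable_fderiv_apply_const ℝ g (Pi.single 2 1)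
  have m1 : Measurable (X1 g) := by unfold X1; fun_prop
  have m2 : Measurable (X2 g) := by unfold X2; fun_prop
  unfold hGrad
  fun_prop

lemma X1_zero {f : Spin3 → ℝ} {x : Spin3} (h : f =ᶠ[nhds x] fun _ => 0) : X1 f x = 0 := by
  simp [X1, h.fderiv_eq]

lemma X2_zero {f : Spin3 → ℝ} {x : Spin3} (h : f =ᶠ[nhds x] fun _ => 0) : X2 f x = 0 := by
  simp [X2, h.fderiv_eq]

lemma cut_bound (α p q n : ℝ) (hα : 0 < α) (hp : 2 ≤ p) (hq : 2 ≤ q) (hn : 1 ≤ n)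
    (g : Spin3 → ℝ) (hg : LocallyLipschitz g) (h0 : ∀ x, kaplan x < 1 → g x = 0) :
    ∫⁻ x, ENNReal.ofReal (|g x| ^ q * kaplan x ^ (p - 3) * max 0 (1 - kaplan x / n) ^ 2 *
        Real.exp (-(α * kaplan x ^ p))) ≤
      ENNReal.ofReal (CC α p q) * ∫⁻ x, ENNReal.ofReal
        ((hGrad g x ^ q + |g x| ^ q) * Real.exp (-(α * kaplan x ^ p))) := by
  have hC := CC_pos α p q hα hp
  set R : Spin3 → ℝ := fun x => (hGrad g x ^ q + |g x| ^ q) * Real.exp (-(α * kaplan x ^ p)) with hR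
  have hR0 : ∀ x, 0 ≤ R x := fun x => by
    have : 0 ≤ hGrad g x := Real.sqrt_nonneg _
    simp only [hR]; positivity
  have hRm : Measurable R := by
    have m1 := hGrad_meas g
    have m2 := hg.continuous.measurable
    have m3 := kaplan_cont.measurable
    simp only [hR]
    fun_prop
  by_cases hI : ∫⁻ x, ENNReal.ofReal (R x) = ⊤
  · rw [hI, ENNReal.mul_top (by simpa using hC)]; exact le_top
  have hRi : Integrable R :=
    ⟨hRm.aestronglyMeasurable, by
      rw [hasFiniteIntegral_iff_ofReal (Eventually.of_forall hR0)]; exact lt_top_iff_ne_top.2 hI⟩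
  have s1 : HasCompactSupport (fun x => |g x| ^ q * w1 α p n x) := G_supp α p n hn _ _
  have s2 : HasCompactSupport (fun x => |g x| ^ q * w2 α p n x) := G_supp α p n hn _ _
  obtain ⟨hDi, hD0⟩ := ibp_int (G_lip q hq g hg h0 _ (w1_contDiff α p n)) s1
    (G_lip q hq g hg h0 _ (w2_contDiff α p n)) s2
  set D : Spin3 → ℝ := fun x => X1 (fun x => |g x| ^ q * w1 α p n x) x +
    X2 (fun x => |g x| ^ q * w2 α p n x) x with hD
  have hle : ∀ᵐ x, |g x| ^ q * kaplan x ^ (p - 3) * max 0 (1 - kaplan x / n) ^ 2 *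
        Real.exp (-(α * kaplan x ^ p)) ≤ CC α p q * R x - D x := by
    filter_upwards [ae_diff hg] with x hx
    by_cases h : kaplan x < 1
    · have hz : ∀ w : Spin3 → ℝ, (fun x => |g x| ^ q * w x) =ᶠ[nhds x] fun _ => 0 := by
        intro w
        filter_upwards [(isOpen_lt kaplan_cont continuous_const).mem_nhds h] with y hy
        rw [h0 y hy, abs_zero, Real.zero_rpow (by linarith), zero_mul]
      simp only [hD]
      rw [X1_zero (hz _), X2_zero (hz _), h0 x h, abs_zero, Real.zero_rpow (by linarith)]
      have := mul_nonneg hC.le (hR0 x)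
      linarith
    · have h1 : 1 ≤ kaplan x := not_lt.1 h
      have hm := main_pt α p n q hα hp hq hn g x h1 hx
      have hpw : kaplan x ^ (p - 3) ≤ kaplan x ^ (p - 2) :=
        Real.rpow_le_rpow_of_exponent_le h1 (by linarith)
      have h2 : |g x| ^ q * kaplan x ^ (p - 3) * max 0 (1 - kaplan x / n) ^ 2 *
        Real.exp (-(α * kaplan x ^ p)) ≤ |g x| ^ q * kaplan x ^ (p - 2) * max 0 (1 - kaplan x / n) ^ 2 *
        Real.exp (-(α * kaplan x ^ p)) := by gcongr
      have h3 : 0 ≤ |g x| ^ q * kaplan x ^ (p - 3) * max 0 (1 - kaplan x / n) ^ 2 *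
        Real.exp (-(α * kaplan x ^ p)) := by positivity
      simp only [hD, hR]
      linarith
  have hint : Integrable (fun x => CC α p q * R x - D x) := (hRi.const_mul _).sub hDi
  calc _ ≤ ∫⁻ x, ENNReal.ofReal (CC α p q * R x - D x) := by
        apply lintegral_mono_ae
        filter_upwards [hle] with x hx
        exact ENNReal.ofReal_le_ofReal hx
    _ = ENNReal.ofReal (∫ x, (CC α p q * R x - D x)) := by
        rw [ofReal_integral_eq_lintegral_ofReal hint]
        filter_upwards [hle] with x hx
        refine le_trans ?_ hx
        have := kaplan_nonneg x
        simp only [Pi.zero_apply]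
        positivity
    _ = ENNReal.ofReal (CC α p q * ∫ x, R x) := by
        rw [integral_sub (hRi.const_mul _) hDi, hD0, sub_zero, integral_const_mul]
    _ = _ := by
        rw [ENNReal.ofReal_mul hC.le, ofReal_integral_eq_lintegral_ofReal hRi (Eventually.of_forall hR0)]

/-- **U-bound for the Kaplan norm** (away from the unit ball). For `α > 0`,
`p, q ≥ 2` there is `C ∈ (0,∞)`, depending only on `α, p, q`, such that for every
locally Lipschitz `g` supported in `{N ≥ 1}`:
`∫ |g|^q N^{p−3} e^{−αN^p} dx ≤ C ∫ (|∇g|^q + |g|^q) e^{−αN^p} dx`. -/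
theorem kaplan_U_bound (α p q : ℝ) (hα : 0 < α) (hp : 2 ≤ p) (hq : 2 ≤ q) :
    ∃ C : ℝ, 0 < C ∧
      ∀ g : Spin3 → ℝ, LocallyLipschitz g → (∀ x, kaplan x < 1 → g x = 0) →
        ∫⁻ x, ENNReal.ofReal
            (|g x| ^ q * kaplan x ^ (p - 3) * Real.exp (-(α * kaplan x ^ p))) ≤
          ENNReal.ofReal C *
            ∫⁻ x, ENNReal.ofReal
              ((hGrad g x ^ q + |g x| ^ q) * Real.exp (-(α * kaplan x ^ p))) := by
  refine ⟨CC α p q, CC_pos α p q hα hp, fun g hg h0 => ?_⟩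
  set F : ℕ → Spin3 → ℝ≥0∞ := fun n x => ENNReal.ofReal (|g x| ^ q * kaplan x ^ (p - 3) *
    max 0 (1 - kaplan x / ((n : ℝ) + 1)) ^ 2 * Real.exp (-(α * kaplan x ^ p))) with hF
  have hlim : ∀ x, Tendsto (fun n => F n x) atTop (nhds (ENNReal.ofReal
      (|g x| ^ q * kaplan x ^ (p - 3) * Real.exp (-(α * kaplan x ^ p))))) := by
    intro x
    apply ENNReal.tendsto_ofReal
    have a1 : Tendsto (fun n : ℕ => kaplan x / ((n : ℝ) + 1)) atTop (nhds 0) :=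
      tendsto_const_nhds.div_atTop (tendsto_atTop_add_const_right _ _ tendsto_natCast_atTop_atTop)
    have a2 : Tendsto (fun n : ℕ => max 0 (1 - kaplan x / ((n : ℝ) + 1)) ^ 2) atTop (nhds 1) := by
      have := ((tendsto_const_nhds (x := (0 : ℝ))).max ((tendsto_const_nhds (x := (1 : ℝ))).sub a1)).pow 2
      simpa using this
    have a3 := (a2.const_mul (|g x| ^ q * kaplan x ^ (p - 3))).mul_const (Real.exp (-(α * kaplan x ^ p)))
    simpa using a3
  have hmeas : ∀ n, Measurable (F n) := by
    intro n
    have m2 := hg.continuous.measurable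
    have m3 := kaplan_cont.measurable
    simp only [hF]
    fun_prop
  calc _ = ∫⁻ x, liminf (fun n => F n x) atTop := by
        apply lintegral_congr
        intro x
        exact (hlim x).liminf_eq.symm
    _ ≤ liminf (fun n => ∫⁻ x, F n x) atTop := lintegral_liminf_le hmeas
    _ ≤ _ := by
        refine liminf_le_of_le (by isBoundedDefault) fun b hb => ?_
        obtain ⟨n, hn⟩ := hb.exists
        refine hn.trans ?_
        exact cut_bound α p q ((n : ℝ) + 1) hα hp hq (by simp) g hg h0
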